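/- Let $\Psi \in C_c^\infty(\mathbb{R}^2)$ be nonnegative with $\int \Psi = 1$ and support in $(-\pi,\pi)^2$, let $\Psi_\rho(x) = \rho^{-2}\Psi(x/\rho)$ and let $\psi_\rho$ denote its periodization on $\mathbb{T}^2$. Let $D_N$ be the Dirichlet kernel projecting onto Fourier modes $|\vec{k}|_\infty \le N$, and let $K_N = D_N \ast \psi_{\rho_N}$ with $\rho_N \sim N^{-1+\delta}$ for some $\delta > 0$. Then $\|\psi_{\rho_N} - K_N\|_{L^1(\mathbb{T}^2)} \to 0$ as $N \to \infty$, and consequently $\|K_N\|_{L^1}$ is uniformly bounded in $N$. -/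

import Mathlib

open MeasureTheory Real
open scoped ENNReal

noncomputable section

/-- Rescaled mollifier `Ψ_ρ(x) = ρ⁻² Ψ(x/ρ)` on `ℝ²`. -/
noncomputable def scaled (Ψ : ℝ × ℝ → ℝ) (ρ : ℝ) (x : ℝ × ℝ) : ℝ :=
  ρ⁻¹ ^ 2 * Ψ (ρ⁻¹ • x)

/-- Periodization of a function on `ℝ²` over the lattice `2πℤ²`. -/
noncomputable def periodize (g : ℝ × ℝ → ℝ) (x : ℝ × ℝ) : ℝ :=
  ∑' n : ℤ × ℤ, g (x.1 + 2 * π * n.1, x.2 + 2 * π * n.2)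

/-- The two-dimensional Dirichlet kernel `D_N(x) = ∑_{|k|_∞ ≤ N} e^{ik·x}`. -/
noncomputable def dirichlet (N : ℕ) (x : ℝ × ℝ) : ℂ :=
  ∑ k ∈ Finset.Icc (-(N : ℤ)) N ×ˢ Finset.Icc (-(N : ℤ)) N,
    Complex.exp (Complex.I * ((k.1 : ℝ) * x.1 + (k.2 : ℝ) * x.2))

/-- A fundamental domain `[0,2π)² ⊂ ℝ²` for the torus `𝕋²`. -/
def Q : Set (ℝ × ℝ) := Set.Ioc 0 (2 * π) ×ˢ Set.Ioc 0 (2 * π)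

/-- `K_N = D_N ∗ ψ_{ρ}`: projection of the periodized mollifier onto Fourier modes
`|k|_∞ ≤ N`, realized as the (normalized) convolution on the torus. -/
noncomputable def KN (Ψ : ℝ × ℝ → ℝ) (ρ : ℝ) (N : ℕ) (x : ℝ × ℝ) : ℂ :=
  (1 / (2 * π) ^ 2 : ℂ) *
    ∫ y in Q, dirichlet N (x - y) * ((periodize (scaled Ψ ρ) y : ℝ) : ℂ)


/-- The plane wave `e^{i ξ·x}`. -/
def pw (ξ x : ℝ × ℝ) : ℂ := Complex.exp (Complex.I * ((ξ.1 : ℝ) * x.1 + (ξ.2 : ℝ) * x.2))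

lemma pw_norm (ξ x : ℝ × ℝ) : ‖pw ξ x‖ = 1 := by
  unfold pw
  rw [Complex.norm_exp]
  simp

lemma pw_continuous (ξ : ℝ × ℝ) : Continuous (pw ξ) := by
  unfold pw; fun_prop

lemma pw_hasFDerivAt (ξ x : ℝ × ℝ) (v : ℝ × ℝ) :
    DifferentiableAt ℝ (pw ξ) x ∧
    fderiv ℝ (pw ξ) x v = Complex.I * ((ξ.1 : ℝ) * v.1 + (ξ.2 : ℝ) * v.2) * pw ξ x := by
  have e1 : HasFDerivAt (fun x : ℝ × ℝ => ((x.1 : ℝ) : ℂ))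
      (Complex.ofRealCLM.comp (ContinuousLinearMap.fst ℝ ℝ ℝ)) x :=
    (Complex.ofRealCLM.comp (ContinuousLinearMap.fst ℝ ℝ ℝ)).hasFDerivAt
  have e2 : HasFDerivAt (fun x : ℝ × ℝ => ((x.2 : ℝ) : ℂ))
      (Complex.ofRealCLM.comp (ContinuousLinearMap.snd ℝ ℝ ℝ)) x :=
    (Complex.ofRealCLM.comp (ContinuousLinearMap.snd ℝ ℝ ℝ)).hasFDerivAt
  have e3 := (((e1.const_mul (ξ.1 : ℂ)).add (e2.const_mul (ξ.2 : ℂ))).const_mul Complex.I).cexp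
  have e4 : HasFDerivAt (pw ξ) _ x := e3
  refine ⟨e4.differentiableAt, ?_⟩
  rw [e4.fderiv]
  simp [pw]
  ring

lemma pw_byparts (f : ℝ × ℝ → ℂ) (hf : ContDiff ℝ (⊤ : ℕ∞) f) (hc : HasCompactSupport f)
    (ξ v : ℝ × ℝ) :
    Complex.I * ((ξ.1 : ℝ) * v.1 + (ξ.2 : ℝ) * v.2) * ∫ x, pw ξ x * f x
      = - ∫ x, pw ξ x * fderiv ℝ f x v := by
  have hfd : Continuous (fun x => fderiv ℝ f x v) :=
    (hf.continuous_fderiv (by simp)).clm_apply continuous_const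
  have hcd : HasCompactSupport (fun x => fderiv ℝ f x v) := hc.fderiv_apply (𝕜 := ℝ) v
  have key := integral_mul_fderiv_eq_neg_fderiv_mul_of_integrable (μ := volume)
    (f := pw ξ) (g := f) (v := v) (𝕜 := ℂ) ?_ ?_ ?_
    (fun x _ => (pw_hasFDerivAt ξ x v).1) (fun x _ => hf.differentiable (by simp) x)
  · rw [key, neg_neg, ← integral_const_mul]
    congr 1
    ext x
    rw [(pw_hasFDerivAt ξ x v).2]
    ring
  · have : (fun x => fderiv ℝ (pw ξ) x v * f x) =
        fun x => Complex.I * ((ξ.1 : ℝ) * v.1 + (ξ.2 : ℝ) * v.2) * pw ξ x * f x := by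
      ext x; rw [(pw_hasFDerivAt ξ x v).2]
    rw [this]
    exact ((continuous_const.mul (pw_continuous ξ)).mul hf.continuous).integrable_of_hasCompactSupport
      hc.mul_left
  · exact ((pw_continuous ξ).mul hfd).integrable_of_hasCompactSupport hcd.mul_left
  · exact ((pw_continuous ξ).mul hf.continuous).integrable_of_hasCompactSupport hc.mul_left

lemma pw_decay_dir (v : ℝ × ℝ) (m : ℕ) : ∀ (f : ℝ × ℝ → ℂ), ContDiff ℝ (⊤ : ℕ∞) f →
    HasCompactSupport f → ∃ C : ℝ, ∀ ξ : ℝ × ℝ,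
      |ξ.1 * v.1 + ξ.2 * v.2| ^ m * ‖∫ x, pw ξ x * f x‖ ≤ C := by
  induction m with
  | zero =>
    intro f hf hc
    refine ⟨∫ x, ‖f x‖, fun ξ => ?_⟩
    rw [pow_zero, one_mul]
    refine (norm_integral_le_integral_norm _).trans (le_of_eq ?_)
    simp [pw_norm]
  | succ m ih =>
    intro f hf hc
    obtain ⟨C, hC⟩ := ih (fun x => fderiv ℝ f x v)
      ((hf.fderiv_right (m := ((⊤ : ℕ∞) : WithTop ℕ∞)) (by simp)).clm_apply contDiff_const)
      (hc.fderiv_apply (𝕜 := ℝ) v)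
    refine ⟨C, fun ξ => ?_⟩
    refine le_trans (le_of_eq ?_) (hC ξ)
    have := congrArg norm (pw_byparts f hf hc ξ v)
    rw [norm_neg, norm_mul, norm_mul, Complex.norm_I, one_mul] at this
    rw [← this, pow_succ, mul_assoc]
    congr 2
    rw [← Complex.ofReal_mul, ← Complex.ofReal_mul, ← Complex.ofReal_add, Complex.norm_real,
      Real.norm_eq_abs]

lemma pw_decay (m : ℕ) (f : ℝ × ℝ → ℂ) (hf : ContDiff ℝ (⊤ : ℕ∞) f)
    (hc : HasCompactSupport f) : ∃ C : ℝ, 0 ≤ C ∧ ∀ ξ : ℝ × ℝ,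
      ‖ξ‖ ^ m * ‖∫ x, pw ξ x * f x‖ ≤ C := by
  obtain ⟨C1, h1⟩ := pw_decay_dir (1, 0) m f hf hc
  obtain ⟨C2, h2⟩ := pw_decay_dir (0, 1) m f hf hc
  refine ⟨max (max C1 C2) 0, le_max_right _ _, fun ξ => ?_⟩
  refine le_trans ?_ (le_max_left _ _)
  rcases max_choice ‖ξ.1‖ ‖ξ.2‖ with h | h
  · rw [Prod.norm_def, h]
    exact le_trans (by simpa using h1 ξ) (le_max_left _ _)
  · rw [Prod.norm_def, h]
    exact le_trans (by simpa using h2 ξ) (le_max_right _ _)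


/-- Integer frequency as a real vector. -/
def kr (k : ℤ × ℤ) : ℝ × ℝ := (k.1, k.2)

/-- Lattice translate. -/
def tr (n : ℤ × ℤ) (x : ℝ × ℝ) : ℝ × ℝ := (x.1 + 2 * π * n.1, x.2 + 2 * π * n.2)

/-- Fourier coefficient on the torus. -/
def fc (ψ : ℝ × ℝ → ℂ) (k : ℤ × ℤ) : ℂ :=
  (1 / (2 * π) ^ 2 : ℂ) * ∫ y in Q, pw (-kr k) y * ψ y

lemma fourier_eq_pw (k : Fin 2 → ℤ) (u : Fin 2 → ℝ) :
    UnitAddTorus.mFourier k (fun i => (u i : UnitAddCircle)) =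
      pw (kr (k 0, k 1)) ((2 * π) • (u 0, u 1)) := by
  simp only [UnitAddTorus.mFourier, ContinuousMap.coe_mk, Fin.prod_univ_two, pw, kr,
    fourier_coe_apply]
  rw [← Complex.exp_add]
  congr 1
  simp
  ring

open scoped Pointwise in
lemma Q_scale : (2 * π) • ((Set.Ioc (0:ℝ) 1) ×ˢ (Set.Ioc (0:ℝ) 1)) = Q := by
  have h : (0:ℝ) < 2 * π := by positivity
  ext ⟨a, b⟩
  rw [Set.mem_smul_set_iff_inv_smul_mem₀ h.ne']
  simp only [Q, Set.mem_prod, Set.mem_Ioc, Prod.smul_mk, smul_eq_mul]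
  rw [inv_mul_le_iff₀ h, inv_mul_le_iff₀ h, mul_one]
  have : ∀ a : ℝ, 0 < (2 * π)⁻¹ * a ↔ 0 < a := fun a => by
    rw [mul_pos_iff_of_pos_left (by positivity)]
  rw [this, this]

lemma fourier_inversion (ψ : ℝ × ℝ → ℂ) (hψ : Continuous ψ)
    (hper : ∀ n x, ψ (tr n x) = ψ x) (hs : Summable (fc ψ)) (x : ℝ × ℝ) :
    HasSum (fun k => fc ψ k * pw (kr k) x) (ψ x) := by
  let q : (Fin 2 → ℝ) → UnitAddTorus (Fin 2) := fun u i => (u i : UnitAddCircle)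
  have hq : IsOpenQuotientMap q :=
    IsOpenQuotientMap.piMap (fun _ => QuotientAddGroup.isOpenQuotientMap_mk)
  let F : (Fin 2 → ℝ) → ℂ := fun u => ψ ((2 * π) • (u 0, u 1))
  have hF : Continuous F := by
    apply hψ.comp
    fun_prop
  have hFq : ∀ u v, q u = q v → F u = F v := by
    intro u v huv
    have h0 := congrFun huv 0
    have h1 := congrFun huv 1
    obtain ⟨a, ha⟩ := (AddCircle.coe_eq_zero_iff (1:ℝ) (x := u 0 - v 0)).mp
      (by rw [AddCircle.coe_sub]; exact sub_eq_zero.mpr h0)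
    obtain ⟨b, hb⟩ := (AddCircle.coe_eq_zero_iff (1:ℝ) (x := u 1 - v 1)).mp
      (by rw [AddCircle.coe_sub]; exact sub_eq_zero.mpr h1)
    simp only [zsmul_eq_mul, mul_one] at ha hb
    change ψ _ = ψ _
    rw [← hper (a, b) ((2 * π) • (v 0, v 1))]
    congr 1
    ext
    · simp [tr, ha]; ring
    · simp [tr, hb]; ring
  let g0 : UnitAddTorus (Fin 2) → ℂ := fun t => F (Function.surjInv hq.surjective t)
  have hg0 : ∀ u, g0 (q u) = F u := fun u => hFq _ _ (Function.surjInv_eq hq.surjective _)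
  have hg0c : Continuous g0 := by
    rw [← hq.continuous_comp_iff]
    have : g0 ∘ q = F := funext hg0
    rwa [this]
  let g : C(UnitAddTorus (Fin 2), ℂ) := ⟨g0, hg0c⟩
  have hcoef : ∀ k : Fin 2 → ℤ, UnitAddTorus.mFourierCoeff g k = fc ψ (k 0, k 1) := by
    intro k
    rw [UnitAddTorus.mFourierCoeff_eq_integral _ _ (fun _ => 0)]
    have e1 : ∀ u : Fin 2 → ℝ, UnitAddTorus.mFourier (-k) (fun i => (u i : UnitAddCircle)) •
        g (fun i => (u i : UnitAddCircle)) =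
        (fun y : ℝ × ℝ => pw (-kr (k 0, k 1)) ((2 * π) • y) * ψ ((2 * π) • y))
          (MeasurableEquiv.finTwoArrow u) := by
      intro u
      rw [fourier_eq_pw]
      have : g (fun i => (u i : UnitAddCircle)) = F u := hg0 u
      rw [this]
      simp [F, kr]
    simp_rw [e1]
    have e2 : {x : Fin 2 → ℝ | ∀ i, x i ∈ Set.Ioc (0:ℝ) (0 + 1)} =
        (MeasurableEquiv.finTwoArrow : (Fin 2 → ℝ) ≃ᵐ ℝ × ℝ) ⁻¹'
          ((Set.Ioc (0:ℝ) 1) ×ˢ (Set.Ioc (0:ℝ) 1)) := by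
      ext u
      simp [Fin.forall_fin_two]
    rw [e2, (volume_preserving_finTwoArrow ℝ).setIntegral_preimage_emb
      (MeasurableEquiv.measurableEmbedding _)
      (fun y : ℝ × ℝ => pw (-kr (k 0, k 1)) ((2 * π) • y) * ψ ((2 * π) • y)),
      Measure.setIntegral_comp_smul_of_pos volume
        (fun y : ℝ × ℝ => pw (-kr (k 0, k 1)) y * ψ y) _ (by positivity : (0:ℝ) < 2 * π), Q_scale,
        fc]
    simp
  let eqv : (Fin 2 → ℤ) ≃ ℤ × ℤ := finTwoArrowEquiv ℤ
  have hs' : Summable (UnitAddTorus.mFourierCoeff g) := by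
    have := eqv.summable_iff.mpr hs
    refine this.congr fun k => ?_
    rw [hcoef]; rfl
  have := UnitAddTorus.hasSum_mFourier_series_apply_of_summable hs'
    (q ![(2 * π)⁻¹ * x.1, (2 * π)⁻¹ * x.2])
  have hx : (2 * π) • ((2 * π)⁻¹ * x.1, (2 * π)⁻¹ * x.2) = x := by
    have : (2 * π) ≠ 0 := by positivity
    ext
    · simp only [Prod.smul_mk, smul_eq_mul]; rw [mul_inv_cancel_left₀ this]
    · simp only [Prod.smul_mk, smul_eq_mul]; rw [mul_inv_cancel_left₀ this]
  rw [← eqv.hasSum_iff]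
  convert! this using 1
  · ext k
    rw [hcoef, fourier_eq_pw]
    simp only [Function.comp, smul_eq_mul, Matrix.cons_val_zero, Matrix.cons_val_one, hx]
    rfl
  · change _ = g0 _
    rw [hg0]
    simp only [F, Matrix.cons_val_zero, Matrix.cons_val_one, hx]


lemma tr_cover (x : ℝ × ℝ) : ∃! n : ℤ × ℤ, tr n x ∈ Q := by
  have h : (0:ℝ) < 2 * π := by positivity
  obtain ⟨a, ha, ha'⟩ := existsUnique_add_zsmul_mem_Ioc h x.1 0
  obtain ⟨b, hb, hb'⟩ := existsUnique_add_zsmul_mem_Ioc h x.2 0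
  simp only [zero_add, zsmul_eq_mul, mul_comm _ (2 * π)] at ha ha' hb hb'
  refine ⟨(a, b), ⟨ha, hb⟩, ?_⟩
  rintro ⟨c, d⟩ ⟨hc, hd⟩
  rw [ha' c hc, hb' d hd]

lemma tr_eq (n : ℤ × ℤ) (x : ℝ × ℝ) : tr n x = x + tr n 0 := by
  ext <;> simp [tr]

lemma tr_mp (n : ℤ × ℤ) : MeasurePreserving (tr n) (volume : Measure (ℝ × ℝ)) volume := by
  have : tr n = fun x => x + tr n 0 := funext (tr_eq n)
  rw [this]
  exact measurePreserving_add_right _ _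

lemma tr_emb (n : ℤ × ℤ) : MeasurableEmbedding (tr n) := by
  have : tr n = fun x => x + tr n 0 := funext (tr_eq n)
  rw [this]
  exact measurableEmbedding_addRight _

lemma Q_meas : MeasurableSet Q := measurableSet_Ioc.prod measurableSet_Ioc

lemma integral_tile {E : Type*} [NormedAddCommGroup E] [NormedSpace ℝ E]
    (G : ℝ × ℝ → E) (hG : Integrable G) :
    HasSum (fun n : ℤ × ℤ => ∫ x in Q, G (tr n x)) (∫ x, G x) := by
  have himg : ∀ n, MeasurableSet (tr n '' Q) := fun n => (tr_emb n).measurableSet_image' Q_meas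
  have hneg : ∀ n x, tr (-n) (tr n x) = x := by intro n x; ext <;> simp [tr]
  have hneg' : ∀ n x, tr n (tr (-n) x) = x := by intro n x; ext <;> simp [tr]
  have hdisj : Pairwise (Function.onFun Disjoint fun n => tr n '' Q) := by
    intro m n hmn
    refine Set.disjoint_left.mpr ?_
    rintro _ ⟨a, ha, rfl⟩ ⟨b, hb, hab⟩
    apply hmn
    have h := (tr_cover (tr m a)).unique (y₁ := -m) (y₂ := -n) (by rwa [hneg])
      (by rw [← hab]; rwa [hneg])
    exact neg_injective h
  have hun : (⋃ n, tr n '' Q) = Set.univ := by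
    refine Set.eq_univ_of_forall fun x => ?_
    obtain ⟨n, hn, -⟩ := tr_cover x
    exact Set.mem_iUnion.mpr ⟨-n, tr n x, hn, hneg n x⟩
  have := hasSum_integral_iUnion (f := G) (μ := volume) himg hdisj hG.integrableOn
  rw [hun, setIntegral_univ] at this
  convert! this using 2 with n
  rw [(tr_mp n).setIntegral_image_emb (tr_emb n)]

lemma unfold_integral {E : Type*} [NormedAddCommGroup E] [NormedSpace ℝ E]
    (G : ℝ × ℝ → E) (hG : Integrable G) :
    ∫ x in Q, ∑' n : ℤ × ℤ, G (tr n x) = ∫ x, G x := by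
  have h1 : ∀ n, Integrable (fun x => G (tr n x)) (volume.restrict Q) := fun n =>
    ((tr_mp n).integrable_comp_of_integrable hG).integrableOn
  have h2 := hasSum_integral_of_summable_integral_norm h1 (integral_tile _ hG.norm).summable
  exact h2.unique (integral_tile _ hG)

lemma periodize_per (g : ℝ × ℝ → ℝ) (n : ℤ × ℤ) (x : ℝ × ℝ) :
    periodize g (tr n x) = periodize g x := by
  unfold periodize
  rw [← (Equiv.addRight n).tsum_eq (fun m : ℤ × ℤ => g (x.1 + 2 * π * m.1, x.2 + 2 * π * m.2))]
  congr 1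
  ext m
  congr 1
  ext <;> simp [tr] <;> ring

lemma periodize_cont (g : ℝ × ℝ → ℝ) (hg : Continuous g) (hc : HasCompactSupport g) :
    Continuous (periodize g) := by
  obtain ⟨R, hR⟩ := hc.isCompact.isBounded.exists_norm_le
  have hz : ∀ y : ℝ × ℝ, R < ‖y‖ → g y = 0 := fun y hy => by
    by_contra h
    exact absurd (hR y (subset_tsupport g h)) (not_le.mpr hy)
  rw [continuous_iff_continuousAt]
  intro x0
  let M : ℤ := ⌈R + ‖x0‖ + 1⌉
  let S : Finset (ℤ × ℤ) := Finset.Icc (-M) M ×ˢ Finset.Icc (-M) M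
  have hpi : (1:ℝ) ≤ 2 * π := by linarith [Real.pi_gt_three]
  have key : ∀ x ∈ Metric.ball x0 1, ∀ n ∉ S,
      g (x.1 + 2 * π * n.1, x.2 + 2 * π * n.2) = 0 := by
    intro x hx n hn
    apply hz
    by_contra hle
    push Not at hle
    apply hn
    rw [Prod.norm_mk, max_le_iff] at hle
    have hx' : ‖x‖ ≤ ‖x0‖ + 1 := by
      have := norm_le_norm_add_norm_sub' x x0
      rw [mem_ball_iff_norm] at hx
      linarith
    have hx1 := (norm_fst_le x).trans hx'
    have hx2 := (norm_snd_le x).trans hx'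
    have aux : ∀ (t : ℝ) (k : ℤ), ‖t‖ ≤ ‖x0‖ + 1 → ‖t + 2 * π * k‖ ≤ R →
        k ∈ Finset.Icc (-M) M := by
      intro t k ht hk
      have : |(k:ℝ)| ≤ M := by
        refine le_trans ?_ (Int.le_ceil _)
        have h1 : |(k:ℝ)| ≤ |2 * π * k| := by
          rw [abs_mul, abs_of_pos (by positivity : (0:ℝ) < 2 * π)]
          nlinarith [abs_nonneg (k:ℝ)]
        have h2 : |2 * π * k| ≤ |t + 2 * π * k| + |t| := by
          have := abs_sub (t + 2 * π * k) t
          simpa using this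
        simp only [Real.norm_eq_abs] at ht hk
        linarith
      rw [← Int.cast_abs] at this
      have := Int.cast_le.mp this
      rw [Finset.mem_Icc]
      exact abs_le.mp this
    exact Finset.mem_product.mpr ⟨aux _ _ hx1 hle.1, aux _ _ hx2 hle.2⟩
  have : (fun x : ℝ × ℝ => ∑ n ∈ S, g (x.1 + 2 * π * n.1, x.2 + 2 * π * n.2))
      =ᶠ[nhds x0] periodize g := by
    filter_upwards [Metric.ball_mem_nhds x0 one_pos] with x hx
    exact (tsum_eq_sum (fun n hn => key x hx n hn)).symm
  refine ContinuousAt.congr ?_ this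
  apply Continuous.continuousAt
  fun_prop


lemma pw_tr (k n : ℤ × ℤ) (x : ℝ × ℝ) : pw (-kr k) (tr n x) = pw (-kr k) x := by
  unfold pw
  rw [Complex.exp_eq_exp_iff_exists_int]
  refine ⟨-(k.1 * n.1 + k.2 * n.2), ?_⟩
  simp [kr, tr]
  ring

lemma scaled_cont (Ψ : ℝ × ℝ → ℝ) (h : Continuous Ψ) (r : ℝ) : Continuous (scaled Ψ r) := by
  unfold scaled; fun_prop

lemma scaled_supp (Ψ : ℝ × ℝ → ℝ) (h : HasCompactSupport Ψ) (r : ℝ) (hr : 0 < r) :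
    HasCompactSupport (scaled Ψ r) := by
  have : HasCompactSupport (fun x => Ψ (r⁻¹ • x)) := h.comp_smul (inv_ne_zero hr.ne')
  exact this.mul_left

lemma integral_periodize (Ψ : ℝ × ℝ → ℝ) (h : Continuous Ψ) (hc : HasCompactSupport Ψ)
    (r : ℝ) (hr : 0 < r) : ∫ x in Q, periodize (scaled Ψ r) x = ∫ x, Ψ x := by
  have h1 := unfold_integral (scaled Ψ r)
    ((scaled_cont Ψ h r).integrable_of_hasCompactSupport (scaled_supp Ψ hc r hr))
  have h2 : ∫ x in Q, periodize (scaled Ψ r) x = ∫ x, scaled Ψ r x := h1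
  rw [h2]
  unfold scaled
  rw [integral_const_mul, Measure.integral_comp_smul]
  simp only [Module.finrank_prod, Module.finrank_self, smul_eq_mul]
  rw [abs_of_pos (by positivity), ← mul_assoc]
  have : r⁻¹ ^ 2 * (r⁻¹ ^ (1 + 1))⁻¹ = 1 := by
    norm_num
    field_simp
  rw [this, one_mul]

lemma fc_eq (Ψ : ℝ × ℝ → ℝ) (h : Continuous Ψ) (hc : HasCompactSupport Ψ)
    (r : ℝ) (hr : 0 < r) (k : ℤ × ℤ) :
    fc (fun x => ((periodize (scaled Ψ r) x : ℝ) : ℂ)) k =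
      (1 / (2 * π) ^ 2 : ℂ) * ∫ x, pw (r • (-kr k)) x * ((Ψ x : ℝ) : ℂ) := by
  have hsc := scaled_cont Ψ h r
  have hss := scaled_supp Ψ hc r hr
  unfold fc
  congr 1
  have h1 := unfold_integral (fun x => pw (-kr k) x * ((scaled Ψ r x : ℝ) : ℂ))
    (((pw_continuous _).mul (Complex.continuous_ofReal.comp hsc)).integrable_of_hasCompactSupport
      (hss.comp_left (g := Complex.ofReal) Complex.ofReal_zero).mul_left)
  have h2 : ∀ x, pw (-kr k) x * ((periodize (scaled Ψ r) x : ℝ) : ℂ) =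
      ∑' n : ℤ × ℤ, pw (-kr k) (tr n x) * ((scaled Ψ r (tr n x) : ℝ) : ℂ) := by
    intro x
    simp_rw [pw_tr]
    rw [tsum_mul_left, ← Complex.ofReal_tsum]
    rfl
  simp_rw [h2]
  rw [h1]
  have h3 : ∀ x, pw (-kr k) x * ((scaled Ψ r x : ℝ) : ℂ) = ((r⁻¹ ^ 2 : ℝ) : ℂ) *
      (fun y => pw (r • (-kr k)) y * ((Ψ y : ℝ) : ℂ)) (r⁻¹ • x) := by
    intro x
    have : pw (-kr k) x = pw (r • (-kr k)) (r⁻¹ • x) := by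
      unfold pw
      congr 2
      have : (r : ℂ) ≠ 0 := by exact_mod_cast hr.ne'
      simp
      field_simp
    rw [this]
    simp only [scaled]
    push_cast
    ring
  simp_rw [h3]
  rw [integral_const_mul, Measure.integral_comp_smul volume
    (fun y => pw (r • (-kr k)) y * ((Ψ y : ℝ) : ℂ))]
  simp only [Module.finrank_prod, Module.finrank_self, Complex.real_smul]
  rw [abs_of_pos (by positivity), ← mul_assoc, ← Complex.ofReal_mul]
  have : r⁻¹ ^ 2 * (r⁻¹ ^ (1 + 1))⁻¹ = 1 := by
    norm_num
    field_simp
  rw [this]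
  simp

/-- The frequency box. -/
def box (N : ℕ) : Finset (ℤ × ℤ) := Finset.Icc (-(N : ℤ)) N ×ˢ Finset.Icc (-(N : ℤ)) N

lemma Q_sub : Q ⊆ Set.Icc 0 (2 * π) ×ˢ Set.Icc 0 (2 * π) :=
  Set.prod_mono Set.Ioc_subset_Icc_self Set.Ioc_subset_Icc_self

lemma cont_int {E : Type*} [NormedAddCommGroup E] (f : ℝ × ℝ → E) (hf : Continuous f) :
    IntegrableOn f Q :=
  (hf.continuousOn.integrableOn_compact (isCompact_Icc.prod isCompact_Icc)).mono_set Q_sub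

lemma Q_fin : volume Q < ⊤ :=
  (measure_mono Q_sub).trans_lt (isCompact_Icc.prod isCompact_Icc).measure_lt_top

lemma KN_eq (Ψ : ℝ × ℝ → ℝ) (h : Continuous Ψ) (hc : HasCompactSupport Ψ)
    (r : ℝ) (hr : 0 < r) (N : ℕ) (x : ℝ × ℝ) :
    KN Ψ r N x = ∑ k ∈ box N, fc (fun x => ((periodize (scaled Ψ r) x : ℝ) : ℂ)) k *
      pw (kr k) x := by
  have hp := periodize_cont _ (scaled_cont Ψ h r) (scaled_supp Ψ hc r hr)
  unfold KN
  have h1 : ∀ y, dirichlet N (x - y) * ((periodize (scaled Ψ r) y : ℝ) : ℂ) =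
      ∑ k ∈ box N, pw (kr k) x * (pw (-kr k) y * ((periodize (scaled Ψ r) y : ℝ) : ℂ)) := by
    intro y
    unfold dirichlet
    rw [Finset.sum_mul]
    refine Finset.sum_congr rfl fun k _ => ?_
    rw [← mul_assoc]
    congr 1
    unfold pw
    rw [← Complex.exp_add]
    congr 1
    simp [kr]
    ring
  simp_rw [h1]
  rw [integral_finsetSum, Finset.mul_sum]
  · refine Finset.sum_congr rfl fun k _ => ?_
    rw [integral_const_mul, fc]
    ring
  · intro k _
    exact (cont_int _ ((pw_continuous _).mul (Complex.continuous_ofReal.comp hp))).const_mul _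

lemma KN_cont (Ψ : ℝ × ℝ → ℝ) (h : Continuous Ψ) (hc : HasCompactSupport Ψ)
    (r : ℝ) (hr : 0 < r) (N : ℕ) : Continuous (KN Ψ r N) := by
  rw [funext (KN_eq Ψ h hc r hr N)]
  exact continuous_finsetSum _ fun k _ => continuous_const.mul (pw_continuous _)

/-- Summable weight on the frequency lattice. -/
def wt (k : ℤ × ℤ) : ℝ := (1 / (1 + |(k.1 : ℝ)|) ^ 2) * (1 / (1 + |(k.2 : ℝ)|) ^ 2)

lemma wt_summable : Summable wt := by
  have h1 : Summable (fun k : ℤ => 1 / (1 + |(k : ℝ)|) ^ 2) := by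
    refine Summable.of_norm_bounded_eventually (g := fun k : ℤ => 1 / (k : ℝ) ^ 2)
      (Real.summable_one_div_int_pow.mpr one_lt_two) ?_
    have : ({0}ᶜ : Set ℤ) ∈ Filter.cofinite := (Set.finite_singleton 0).compl_mem_cofinite
    filter_upwards [this] with k hk
    have hk0 : (k:ℝ) ≠ 0 := by exact_mod_cast hk
    rw [Real.norm_eq_abs, abs_of_nonneg (by positivity)]
    apply one_div_le_one_div_of_le (by positivity)
    rw [← sq_abs (k:ℝ)]
    gcongr
    linarith
  exact h1.mul_of_nonneg h1 (fun k => by positivity) (fun k => by positivity)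

lemma fc_bound (Ψ : ℝ × ℝ → ℝ) (hΨ : ContDiff ℝ (⊤ : ℕ∞) Ψ) (hc : HasCompactSupport Ψ) (p : ℕ) :
    ∃ C : ℝ, 0 ≤ C ∧ ∀ r : ℝ, 0 < r → ∀ N : ℕ, 1 ≤ N → ∀ k ∉ box N,
      ‖fc (fun x => ((periodize (scaled Ψ r) x : ℝ) : ℂ)) k‖ ≤
        C / (r ^ (p + 4) * (N : ℝ) ^ p) * wt k := by
  obtain ⟨C, hC0, hC⟩ := pw_decay (p + 4) (fun x => ((Ψ x : ℝ) : ℂ))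
    (Complex.ofRealCLM.contDiff.comp hΨ) (hc.comp_left (g := Complex.ofReal) Complex.ofReal_zero)
  refine ⟨16 * C, by positivity, fun r hr N hN k hk => ?_⟩
  rw [fc_eq Ψ hΨ.continuous hc r hr, norm_mul]
  have h1 : ‖(1 / (2 * π) ^ 2 : ℂ)‖ ≤ 1 := by
    have : (1 / (2 * π) ^ 2 : ℂ) = ((1 / (2 * π) ^ 2 : ℝ) : ℂ) := by push_cast; rfl
    rw [this, Complex.norm_real, Real.norm_eq_abs, abs_of_nonneg (by positivity)]
    rw [div_le_one (by positivity)]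
    nlinarith [Real.pi_gt_three]
  set I := ‖∫ x, pw (r • (-kr k)) x * ((Ψ x : ℝ) : ℂ)‖ with hI
  have h2 : (r * ‖kr k‖) ^ (p + 4) * I ≤ C := by
    have := hC (r • (-kr k))
    rwa [norm_smul, norm_neg, Real.norm_eq_abs, abs_of_pos hr] at this
  have hM1 : |(k.1:ℝ)| ≤ ‖kr k‖ := norm_fst_le (kr k)
  have hM2 : |(k.2:ℝ)| ≤ ‖kr k‖ := norm_snd_le (kr k)
  have hMN : (N:ℝ) ≤ ‖kr k‖ := by
    by_contra hlt
    push Not at hlt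
    apply hk
    have aux : ∀ j : ℤ, |(j:ℝ)| ≤ ‖kr k‖ → j ∈ Finset.Icc (-(N:ℤ)) N := by
      intro j hj
      have : |(j:ℝ)| ≤ ((N:ℤ):ℝ) := by push_cast; linarith
      rw [← Int.cast_abs] at this
      rw [Finset.mem_Icc]
      exact abs_le.mp (Int.cast_le.mp this)
    exact Finset.mem_product.mpr ⟨aux _ hM1, aux _ hM2⟩
  have hN1 : (1:ℝ) ≤ N := by exact_mod_cast hN
  set M := ‖kr k‖ with hM
  have hMpos : 0 < M := by linarith
  have hw : 1 ≤ 16 * M ^ 4 * wt k := by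
    unfold wt
    rw [one_div_mul_one_div, mul_one_div, le_div_iff₀ (by positivity), one_mul]
    calc (1 + |(k.1:ℝ)|) ^ 2 * (1 + |(k.2:ℝ)|) ^ 2 ≤ (2 * M) ^ 2 * (2 * M) ^ 2 := by
          gcongr <;> linarith
      _ = 16 * M ^ 4 := by ring
  have hw0 : 0 ≤ wt k := by unfold wt; positivity
  have hI0 : 0 ≤ I := norm_nonneg _
  calc _ ≤ 1 * I := by gcongr
    _ = I := one_mul I
    _ ≤ 16 * C / (r ^ (p + 4) * (N : ℝ) ^ p) * wt k := by
      rw [div_mul_eq_mul_div, le_div_iff₀ (by positivity)]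
      calc I * (r ^ (p + 4) * (N : ℝ) ^ p) ≤ I * (r ^ (p + 4) * M ^ p) := by gcongr
        _ ≤ I * (r ^ (p + 4) * M ^ p) * (16 * M ^ 4 * wt k) :=
          le_mul_of_one_le_right (by positivity) hw
        _ = 16 * ((r * M) ^ (p + 4) * I) * wt k := by ring
        _ ≤ 16 * C * wt k := by gcongr

lemma pointwise_bound (Ψ : ℝ × ℝ → ℝ) (h : Continuous Ψ) (hc : HasCompactSupport Ψ)
    (r : ℝ) (hr : 0 < r) (N : ℕ) (B : ℝ)
    (hB : ∀ k ∉ box N, ‖fc (fun x => ((periodize (scaled Ψ r) x : ℝ) : ℂ)) k‖ ≤ B * wt k)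
    (hB0 : 0 ≤ B) (x : ℝ × ℝ) :
    ‖((periodize (scaled Ψ r) x : ℝ) : ℂ) - KN Ψ r N x‖ ≤ B * ∑' k, wt k := by
  have hp := periodize_cont _ (scaled_cont Ψ h r) (scaled_supp Ψ hc r hr)
  have hs : Summable (fc (fun x => ((periodize (scaled Ψ r) x : ℝ) : ℂ))) := by
    refine Summable.of_norm_bounded_eventually (wt_summable.mul_left B) ?_
    filter_upwards [(box N).finite_toSet.compl_mem_cofinite] with k hk
    exact hB k (by simpa using hk)
  have h1 := fourier_inversion (fun x => ((periodize (scaled Ψ r) x : ℝ) : ℂ))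
    (Complex.continuous_ofReal.comp hp)
    (fun n x => by simp only [periodize_per]) hs x
  have h2 : HasSum (fun k => if k ∈ box N then
      fc (fun x => ((periodize (scaled Ψ r) x : ℝ) : ℂ)) k * pw (kr k) x else 0)
      (KN Ψ r N x) := by
    rw [KN_eq Ψ h hc r hr]
    have := hasSum_sum_of_ne_finset_zero (s := box N) (L := SummationFilter.unconditional _) (f := fun k => if k ∈ box N then
      fc (fun x => ((periodize (scaled Ψ r) x : ℝ) : ℂ)) k * pw (kr k) x else 0)
      (fun k hk => if_neg hk)
    convert! this using 1
    exact Finset.sum_congr rfl fun k hk => (if_pos hk).symm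
  refine (h1.sub h2).norm_le_of_bounded (wt_summable.hasSum.mul_left B) fun k => ?_
  split_ifs with hk
  · have : 0 ≤ wt k := by unfold wt; positivity
    simpa using! mul_nonneg hB0 this
  · rw [sub_zero, norm_mul, pw_norm, mul_one]
    exact hB k hk

/-- Let `Ψ ∈ C_c^∞(ℝ²)` be nonnegative with `∫ Ψ = 1` and support in `(-π,π)²`, let
`ψ_ρ` be the periodization of `Ψ_ρ(x) = ρ⁻² Ψ(x/ρ)`, and `K_N = D_N ∗ ψ_{ρ_N}` with
`ρ_N ∼ N^{-1+δ}`, `δ > 0`. Then `‖ψ_{ρ_N} - K_N‖_{L¹(𝕋²)} → 0` as `N → ∞`, and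
consequently `‖K_N‖_{L¹}` is uniformly bounded in `N`. -/
theorem stmt11 (Ψ : ℝ × ℝ → ℝ) (hsm : ContDiff ℝ (⊤ : ℕ∞) Ψ)
    (hsupp : tsupport Ψ ⊆ Set.Ioo (-π) π ×ˢ Set.Ioo (-π) π)
    (h0 : ∀ x, 0 ≤ Ψ x) (h1 : ∫ x, Ψ x = 1)
    (ρ : ℕ → ℝ) (hρ : ∀ N, 0 < ρ N) (δ : ℝ) (hδ : 0 < δ)
    (hasym : ∃ c₁ > (0 : ℝ), ∃ c₂ > (0 : ℝ), ∀ N : ℕ, 1 ≤ N →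
      c₁ * (N : ℝ) ^ (-1 + δ) ≤ ρ N ∧ ρ N ≤ c₂ * (N : ℝ) ^ (-1 + δ)) :
    Filter.Tendsto (fun N : ℕ =>
        ∫ x in Q, ‖((periodize (scaled Ψ (ρ N)) x : ℝ) : ℂ) - KN Ψ (ρ N) N x‖)
      Filter.atTop (nhds 0) ∧
    ∃ C : ℝ, ∀ N : ℕ, (∫ x in Q, ‖KN Ψ (ρ N) N x‖) ≤ C := by
  have hc : HasCompactSupport Ψ := by
    refine HasCompactSupport.of_support_subset_isCompact
      (K := Set.Icc (-π) π ×ˢ Set.Icc (-π) π) (isCompact_Icc.prod isCompact_Icc) ?_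
    exact (subset_tsupport Ψ).trans (hsupp.trans
      (Set.prod_mono Set.Ioo_subset_Icc_self Set.Ioo_subset_Icc_self))
  have hcont := hsm.continuous
  have hT : Filter.Tendsto (fun N : ℕ =>
        ∫ x in Q, ‖((periodize (scaled Ψ (ρ N)) x : ℝ) : ℂ) - KN Ψ (ρ N) N x‖)
      Filter.atTop (nhds 0) := by
    obtain ⟨c₁, hc₁, c₂, hc₂, hb⟩ := hasym
    obtain ⟨p, hp⟩ := exists_nat_gt (4 / δ)
    have hp' : 4 < p * δ := by rwa [div_lt_iff₀ hδ] at hp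
    obtain ⟨C, hC0, hC⟩ := fc_bound Ψ hsm hc p
    have hexp : 0 < (p + 4) * δ - 4 := by nlinarith
    let A : ℝ := C / c₁ ^ (p + 4) * (∑' k, wt k) * volume.real Q
    have hlim : Filter.Tendsto (fun N : ℕ => (N : ℝ) ^ (-((p + 4) * δ - 4)) * A)
        Filter.atTop (nhds 0) := by
      have := ((tendsto_rpow_neg_atTop hexp).comp tendsto_natCast_atTop_atTop).mul_const A
      simpa using! this
    refine squeeze_zero' (Filter.Eventually.of_forall fun N =>
      integral_nonneg fun x => norm_nonneg _) ?_ hlim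
    filter_upwards [Filter.eventually_ge_atTop 1] with N hN
    have hN0 : (0:ℝ) < N := by exact_mod_cast hN
    have hW : 0 ≤ ∑' k, wt k := tsum_nonneg fun k => by unfold wt; positivity
    have hB0 : 0 ≤ C / (ρ N ^ (p + 4) * (N : ℝ) ^ p) := by
      have := hρ N
      positivity
    have hpt := pointwise_bound Ψ hcont hc (ρ N) (hρ N) N _ (hC (ρ N) (hρ N) N hN) hB0
    have h2 := norm_setIntegral_le_of_norm_le_const (μ := volume) (s := Q)
      (f := fun x => ‖((periodize (scaled Ψ (ρ N)) x : ℝ) : ℂ) - KN Ψ (ρ N) N x‖)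
      Q_fin (fun x _ => by rw [norm_norm]; exact hpt x)
    refine (le_abs_self _).trans (h2.trans ?_)
    have hpow : c₁ ^ (p + 4) * (N : ℝ) ^ ((p + 4) * δ - 4) ≤ ρ N ^ (p + 4) * (N : ℝ) ^ p := by
      have e : (N : ℝ) ^ ((p + 4) * δ - 4) = ((N : ℝ) ^ (-1 + δ)) ^ (p + 4) * (N : ℝ) ^ p := by
        rw [← Real.rpow_natCast ((N : ℝ) ^ (-1 + δ)), ← Real.rpow_mul hN0.le,
          ← Real.rpow_natCast (N : ℝ) p, ← Real.rpow_add hN0]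
        congr 1
        push_cast
        ring
      rw [e, ← mul_assoc, ← mul_pow]
      gcongr
      exact (hb N hN).1
    calc C / (ρ N ^ (p + 4) * (N : ℝ) ^ p) * (∑' k, wt k) * volume.real Q
        ≤ C / (c₁ ^ (p + 4) * (N : ℝ) ^ ((p + 4) * δ - 4)) * (∑' k, wt k) * volume.real Q := by
          gcongr
      _ = (N : ℝ) ^ (-((p + 4) * δ - 4)) * A := by
          rw [Real.rpow_neg hN0.le, div_mul_eq_div_div]
          simp only [A]
          ring
  refine ⟨hT, ?_⟩
  obtain ⟨C, hC⟩ := hT.bddAbove_range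
  refine ⟨1 + C, fun N => ?_⟩
  have hpc := periodize_cont _ (scaled_cont Ψ hcont (ρ N)) (scaled_supp Ψ hc (ρ N) (hρ N))
  have hkc := KN_cont Ψ hcont hc (ρ N) (hρ N) N
  have hpos : ∀ x, 0 ≤ periodize (scaled Ψ (ρ N)) x := fun x =>
    tsum_nonneg fun n => mul_nonneg (by positivity) (h0 _)
  have hi1 : ∫ x in Q, periodize (scaled Ψ (ρ N)) x = 1 := by
    rw [integral_periodize Ψ hcont hc (ρ N) (hρ N), h1]
  have hint2 : IntegrableOn
      (fun x => ‖((periodize (scaled Ψ (ρ N)) x : ℝ) : ℂ) - KN Ψ (ρ N) N x‖) Q := cont_int _ ((Complex.continuous_ofReal.comp hpc).sub hkc).norm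
  calc (∫ x in Q, ‖KN Ψ (ρ N) N x‖)
      ≤ ∫ x in Q, (periodize (scaled Ψ (ρ N)) x +
          ‖((periodize (scaled Ψ (ρ N)) x : ℝ) : ℂ) - KN Ψ (ρ N) N x‖) := by
        refine integral_mono (cont_int _ hkc.norm) ((cont_int _ hpc).add hint2) fun x => ?_
        have := norm_sub_le ((periodize (scaled Ψ (ρ N)) x : ℝ) : ℂ)
          (((periodize (scaled Ψ (ρ N)) x : ℝ) : ℂ) - KN Ψ (ρ N) N x)
        rw [sub_sub_cancel, Complex.norm_real, Real.norm_eq_abs, abs_of_nonneg (hpos x)] at this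
        exact this
    _ = 1 + ∫ x in Q, ‖((periodize (scaled Ψ (ρ N)) x : ℝ) : ℂ) - KN Ψ (ρ N) N x‖ := by
        rw [integral_add (cont_int _ hpc) hint2, hi1]
    _ ≤ 1 + C := by
        have := hC (Set.mem_range_self N)
        linarith
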